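/- arXiv:2503.14373 — 3 statements merged into one kernel-verified Lean document; each statement's English description precedes it below -/
import Mathlib

section
/- Let n be a positive integer. Then 4·δ(n) < n + 12 if and only if both of the following hold: (a) n is not of the form p, 2p, 3p or 4p for any odd prime p; and (b) n is not one of the numbers 4, 6, 8, 16, 18, 24, 25, 27, 30, 32, 35, 36, 40. Moreover, 4·δ(n) = n + 12 if and only if n ∈ {4, 36, 40}. -/
/-- `staircaseDelta n` is the minimum of `r + s` over all pairs of positive
integers `(r, s)` with `r ≤ s` and `r * s = n`. -/
noncomputable def staircaseDelta (n : ℕ) : ℕ :=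
  sInf {w : ℕ | ∃ r s : ℕ, 0 < r ∧ r ≤ s ∧ r * s = n ∧ w = r + s}

/-!
In `ℤ`, a factorization `n = r * s` satisfies `4 * (r + s) < n + 12` exactly when
`4 < (r - 4) * (s - 4)`, and likewise with equalities. If a factor is at most `4`, the inequality
forces `n ≤ 2`; if both are at least `5`, it fails only for `n = 25, 30, 35, 36, 40`. So the
question is which `n` are products of two factors `≥ 5`. Every `n ≥ 5` has a divisor which is `6`,
`8`, `9` or a prime `≥ 5`; if its cofactor is at most `4`, then `n` is a small multiple of an odd
prime or lies in a short list, unless `n = 36 = 6 * 6`. Conversely, every factorization of `k * p`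
with `k ≤ 4` and `p` prime has a factor at most `4`, and `4 * n ≤ δ(n) ^ 2` together with the
integrality of `δ(n)` excludes the strict inequality for all `4 ≤ n ≤ 40` at once.
-/

section StaircaseDelta

variable {n r s : ℕ}

lemma exists_staircaseDelta_eq_add (hn : 0 < n) :
    ∃ r s : ℕ, 0 < r ∧ r ≤ s ∧ r * s = n ∧ staircaseDelta n = r + s :=
  Nat.sInf_mem (s := {w : ℕ | ∃ r s : ℕ, 0 < r ∧ r ≤ s ∧ r * s = n ∧ w = r + s})
    ⟨1 + n, 1, n, one_pos, hn, one_mul n, rfl⟩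

lemma staircaseDelta_mul_le_add (hr : 0 < r) (hs : 0 < s) : staircaseDelta (r * s) ≤ r + s := by
  rcases le_total r s with hrs | hsr
  · exact Nat.sInf_le ⟨r, s, hr, hrs, rfl, rfl⟩
  · exact Nat.sInf_le ⟨s, r, hs, hsr, mul_comm s r, add_comm r s⟩

lemma four_mul_le_staircaseDelta_sq (n : ℕ) : 4 * n ≤ staircaseDelta n ^ 2 := by
  rcases n.eq_zero_or_pos with rfl | hn
  · exact Nat.zero_le _
  · obtain ⟨r, s, -, -, rfl, hδ⟩ := exists_staircaseDelta_eq_add hn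
    rw [hδ, ← mul_assoc]
    exact four_mul_le_sq_add r s

lemma add_twelve_le_four_mul_staircaseDelta (h4 : 4 ≤ n) (h40 : n ≤ 40) :
    n + 12 ≤ 4 * staircaseDelta n := by
  have hsq := four_mul_le_staircaseDelta_sq n
  by_contra! hlt
  have hδ : staircaseDelta n ≤ 12 := by omega
  interval_cases staircaseDelta n <;> omega

end StaircaseDelta

section Factorizations

variable {n r s : ℕ}

lemma mul_le_two_of_four_mul_add_lt (hrs : r ≤ 4 ∨ s ≤ 4) (h : 4 * (r + s) < r * s + 12) :
    r * s ≤ 2 := by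
  rcases hrs with hr | hs
  · interval_cases r <;> omega
  · interval_cases s <;> omega

lemma four_mul_add_lt_of_five_le (hr : 5 ≤ r) (hs : 5 ≤ s)
    (hrs : r * s ∉ ({25, 30, 35, 36, 40} : Set ℕ)) : 4 * (r + s) < r * s + 12 := by
  obtain ⟨a, rfl⟩ := Nat.exists_eq_add_of_le hr
  obtain ⟨b, rfl⟩ := Nat.exists_eq_add_of_le hs
  by_contra! hle
  have hab : a * b + a + b ≤ 3 := by linarith
  have ha : a ≤ 3 := by linarith [Nat.zero_le (a * b)]
  simp only [Set.mem_insert_iff, Set.mem_singleton_iff] at hrs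
  interval_cases a <;> omega

lemma mul_mem_of_four_mul_add_eq (hr : 0 < r) (hrs : r ≤ s) (h : 4 * (r + s) = r * s + 12) :
    r * s ∈ ({4, 36, 40} : Set ℕ) := by
  have hr6 : r ≤ 6 := by
    by_contra! hr7
    nlinarith
  simp only [Set.mem_insert_iff, Set.mem_singleton_iff]
  interval_cases r <;> omega

lemma dvd_or_dvd_of_mul_eq_mul_prime {M : Type*} [CommMonoidWithZero M] [IsCancelMulZero M]
    {a b k p : M} (hp : Prime p) (h : a * b = k * p) : a ∣ k ∨ b ∣ k := by
  rcases hp.dvd_or_dvd (h ▸ dvd_mul_left p k) with ⟨c, rfl⟩ | ⟨c, rfl⟩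
  · exact .inr ⟨c, mul_right_cancel₀ hp.ne_zero (by rw [← h]; ac_rfl)⟩
  · exact .inl ⟨c, mul_right_cancel₀ hp.ne_zero (by rw [← h]; ac_rfl)⟩

lemma exists_dvd_prime_or_mem_of_five_le (hn : 5 ≤ n) :
    ∃ d, d ∣ n ∧ 5 ≤ d ∧ (d.Prime ∨ d ∈ ({6, 8, 9} : Set ℕ)) := by
  induction n using Nat.strong_induction_on with
  | _ n ih =>
  by_cases hp : n.Prime
  · exact ⟨n, dvd_rfl, hn, .inl hp⟩
  obtain ⟨a, b, han, hbn, rfl⟩ := (Nat.not_prime_iff_exists_mul_eq (by omega)).1 hp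
  by_cases ha : 5 ≤ a
  · obtain ⟨d, hda, hd⟩ := ih a han ha
    exact ⟨d, hda.mul_right b, hd⟩
  by_cases hb : 5 ≤ b
  · obtain ⟨d, hdb, hd⟩ := ih b hbn hb
    exact ⟨d, hdb.mul_left a, hd⟩
  have hmem : a * b ∈ ({6, 8, 9, 12, 16} : Set ℕ) := by
    simp only [Set.mem_insert_iff, Set.mem_singleton_iff]
    interval_cases a <;> omega
  rcases hmem with h | h | h | h | h <;> rw [h]
  · exact ⟨6, by simp⟩
  · exact ⟨8, by simp⟩
  · exact ⟨9, by simp⟩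
  · exact ⟨6, by norm_num⟩
  · exact ⟨8, by norm_num⟩

/-- `n` is `k` times an odd prime for some `k ∈ {1, 2, 3, 4}`: the numbers excluded by
condition (a). -/
def IsSmallMulOddPrime (n : ℕ) : Prop :=
  ∃ k p : ℕ, 0 < k ∧ k ≤ 4 ∧ p.Prime ∧ Odd p ∧ n = k * p

lemma not_isSmallMulOddPrime_iff : ¬ IsSmallMulOddPrime n ↔
    ∀ p : ℕ, p.Prime → Odd p → n ≠ p ∧ n ≠ 2 * p ∧ n ≠ 3 * p ∧ n ≠ 4 * p := by
  constructor
  · intro h p hp hodd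
    have hne (k : ℕ) (hk : 0 < k) (hk4 : k ≤ 4) : n ≠ k * p :=
      fun hkp ↦ h ⟨k, p, hk, hk4, hp, hodd, hkp⟩
    exact ⟨one_mul p ▸ hne 1 (by simp) (by simp), hne 2 (by simp) (by simp),
      hne 3 (by simp) (by simp), hne 4 (by simp) (by simp)⟩
  · rintro h ⟨k, p, hk, hk4, hp, hodd, hkp⟩
    have hne := h p hp hodd
    interval_cases k <;> omega

lemma exists_mul_eq_or_isSmallMulOddPrime_or_mem (hn : 5 ≤ n) :
    (∃ r s, 5 ≤ r ∧ 5 ≤ s ∧ r * s = n) ∨ IsSmallMulOddPrime n ∨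
      n ∈ ({8, 16, 18, 24, 27, 32} : Set ℕ) := by
  obtain ⟨d, ⟨k, rfl⟩, hd5, hd⟩ := exists_dvd_prime_or_mem_of_five_le hn
  by_cases hk5 : 5 ≤ k
  · exact .inl ⟨d, k, hd5, hk5, rfl⟩
  have hk : 0 < k := Nat.pos_of_ne_zero (by rintro rfl; simp at hn)
  have small_mul_three {m : ℕ} (hm : 0 < m) (hm4 : m ≤ 4) : IsSmallMulOddPrime (m * 3) :=
    ⟨m, 3, hm, hm4, Nat.prime_three, by decide, rfl⟩
  rcases hd with hp | rfl | rfl | rfl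
  · exact .inr <| .inl ⟨k, d, hk, by omega, hp, hp.odd_of_ne_two (by omega), mul_comm d k⟩
  · interval_cases k
    · exact .inr <| .inl <| small_mul_three (m := 2) (by simp) (by simp)
    · exact .inr <| .inl <| small_mul_three (m := 4) (by simp) (by simp)
    · simp
    · simp
  · interval_cases k <;> simp
  · interval_cases k
    · exact .inr <| .inl <| small_mul_three (m := 3) (by simp) (by simp)
    · simp
    · simp
    · exact .inl ⟨6, 6, by simp⟩

end Factorizations

section Comparison

variable {n : ℕ}

lemma add_twelve_le_four_mul_staircaseDelta_of_isSmallMulOddPrime (h : IsSmallMulOddPrime n) :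
    n + 12 ≤ 4 * staircaseDelta n := by
  obtain ⟨k, p, hk, hk4, hp, hodd, rfl⟩ := h
  obtain ⟨r, s, -, -, hrs, hδ⟩ := exists_staircaseDelta_eq_add (Nat.mul_pos hk hp.pos)
  have hrs3 : 3 ≤ r * s := hrs ▸ (hp.odd_iff.1 hodd).trans (Nat.le_mul_of_pos_left p hk)
  have hrs4 : r ≤ 4 ∨ s ≤ 4 := (dvd_or_dvd_of_mul_eq_mul_prime hp.prime hrs).imp
    (fun hr ↦ (Nat.le_of_dvd hk hr).trans hk4) (fun hs ↦ (Nat.le_of_dvd hk hs).trans hk4)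
  rw [hδ, ← hrs]
  by_contra! hlt
  have hrs2 : r * s ≤ 2 := mul_le_two_of_four_mul_add_lt hrs4 hlt
  omega

lemma four_mul_staircaseDelta_lt (hn : 0 < n) (ha : ¬ IsSmallMulOddPrime n)
    (hb : n ∉ ({4, 6, 8, 16, 18, 24, 25, 27, 30, 32, 35, 36, 40} : Set ℕ)) :
    4 * staircaseDelta n < n + 12 := by
  have hn3 : n ≠ 3 := by
    rintro rfl
    exact ha ⟨1, 3, by decide⟩
  simp only [Set.mem_insert_iff, Set.mem_singleton_iff] at hb
  rcases lt_or_ge n 5 with hn5 | hn5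
  · have hδ : staircaseDelta n ≤ 1 + n := by simpa using staircaseDelta_mul_le_add one_pos hn
    omega
  rcases exists_mul_eq_or_isSmallMulOddPrime_or_mem hn5 with ⟨r, s, hr, hs, rfl⟩ | h | h
  · calc
      4 * staircaseDelta (r * s) ≤ 4 * (r + s) := by
        gcongr
        exact staircaseDelta_mul_le_add (by omega) (by omega)
      _ < r * s + 12 := four_mul_add_lt_of_five_le hr hs <| by
        simp only [Set.mem_insert_iff, Set.mem_singleton_iff]
        omega
  · exact absurd h ha
  · simp only [Set.mem_insert_iff, Set.mem_singleton_iff] at h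
    omega

lemma four_mul_staircaseDelta_eq_iff (hn : 0 < n) :
    4 * staircaseDelta n = n + 12 ↔ n ∈ ({4, 36, 40} : Set ℕ) := by
  constructor
  · intro h
    obtain ⟨r, s, hr, hrs, rfl, hδ⟩ := exists_staircaseDelta_eq_add hn
    exact mul_mem_of_four_mul_add_eq hr hrs (hδ ▸ h)
  · rintro (rfl | rfl | rfl) <;>
      refine le_antisymm ?_ (add_twelve_le_four_mul_staircaseDelta (by simp) (by simp))
    · exact Nat.mul_le_mul_left 4 (staircaseDelta_mul_le_add (r := 2) (s := 2) (by simp) (by simp))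
    · exact Nat.mul_le_mul_left 4 (staircaseDelta_mul_le_add (r := 6) (s := 6) (by simp) (by simp))
    · exact Nat.mul_le_mul_left 4 (staircaseDelta_mul_le_add (r := 5) (s := 8) (by simp) (by simp))

end Comparison

/-- For a positive integer `n`, `4·δ(n) < n + 12` iff (a) `n ≠ p, 2p, 3p, 4p` for
every odd prime `p`, and (b) `n` is not one of listed exceptional numbers; moreover
`4·δ(n) = n + 12` iff `n ∈ {4, 36, 40}`. -/
theorem stmt7 (n : ℕ) (hn : 0 < n) :
    (4 * staircaseDelta n < n + 12 ↔
      (∀ p : ℕ, Nat.Prime p → Odd p → n ≠ p ∧ n ≠ 2 * p ∧ n ≠ 3 * p ∧ n ≠ 4 * p) ∧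
      n ∉ ({4, 6, 8, 16, 18, 24, 25, 27, 30, 32, 35, 36, 40} : Set ℕ)) ∧
    (4 * staircaseDelta n = n + 12 ↔ n ∈ ({4, 36, 40} : Set ℕ)) := by
  refine ⟨?_, four_mul_staircaseDelta_eq_iff hn⟩
  rw [← not_isSmallMulOddPrime_iff]
  refine ⟨fun hlt ↦ ⟨fun ha ↦ ?_, fun hb ↦ ?_⟩, fun ⟨ha, hb⟩ ↦ four_mul_staircaseDelta_lt hn ha hb⟩
  · exact hlt.not_ge (add_twelve_le_four_mul_staircaseDelta_of_isSmallMulOddPrime ha)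
  · simp only [Set.mem_insert_iff, Set.mem_singleton_iff] at hb
    exact hlt.not_ge (add_twelve_le_four_mul_staircaseDelta (by omega) (by omega))
end

section
/- Let k and n be positive integers with k² + 1 ≤ n ≤ k² + k, and let t, r₁, …, r_t, s₁, …, s_t be positive integers such that n = r₁s₁ + r₂s₂ + ⋯ + r_t s_t and r₁ > r₂ > ⋯ > r_t (the latter condition being vacuous when t = 1). Then r₁ + s₁ + s₂ + ⋯ + s_t ≥ 2k + 1. -/
theorem sum_mul_le_mul_sum_of_forall_le {R ι : Type*} [Semiring R] [PartialOrder R]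
    [IsOrderedRing R] {A : Finset ι} {r s : ι → R} {a : R}
    (hr : ∀ i ∈ A, r i ≤ a) (hs : ∀ i ∈ A, 0 ≤ s i) :
    ∑ i ∈ A, r i * s i ≤ a * ∑ i ∈ A, s i := by
  rw [Finset.mul_sum]
  exact Finset.sum_le_sum fun i hi => mul_le_mul_of_nonneg_right (hr i hi) (hs i hi)

section

variable {R : Type*} [CommSemiring R] [LinearOrder R] [IsStrictOrderedRing R] [ExistsAddOfLE R]

theorem two_mul_lt_add_of_sq_lt_mul {a b k : R} (hb : 0 ≤ b) (h : k ^ 2 < a * b) :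
    2 * k < a + b := by
  have ha : 0 < a := pos_of_mul_pos_left ((sq_nonneg k).trans_lt h) hb
  refine lt_of_pow_lt_pow_left₀ 2 (add_nonneg ha.le hb) ?_
  calc (2 * k) ^ 2 = 4 * k ^ 2 := by ring
    _ < 4 * (a * b) := by gcongr
    _ = 4 * a * b := (mul_assoc 4 a b).symm
    _ ≤ (a + b) ^ 2 := four_mul_le_sq_add a b

theorem stmt16_general {ι : Type*} {A : Finset ι} {r s : ι → R} {a k : R}
    (hr : ∀ i ∈ A, r i ≤ a) (hs : ∀ i ∈ A, 0 ≤ s i) (h : k ^ 2 < ∑ i ∈ A, r i * s i) :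
    2 * k < a + ∑ i ∈ A, s i :=
  two_mul_lt_add_of_sq_lt_mul (Finset.sum_nonneg hs)
    (h.trans_le (sum_mul_le_mul_sum_of_forall_le hr hs))

end

/-- Let `k, n` be positive integers with `k^2 + 1 ≤ n ≤ k^2 + k`, and let
`n = r₁s₁ + ⋯ + r_t s_t` with `t ≥ 1`, all `rᵢ, sᵢ` positive and
`r₁ > r₂ > ⋯ > r_t`. Then `r₁ + s₁ + ⋯ + s_t ≥ 2k + 1`. -/
theorem stmt16 (k n : ℕ) (hk : 0 < k) (h1 : k ^ 2 + 1 ≤ n) (h2 : n ≤ k ^ 2 + k)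
    (t : ℕ) (ht : 0 < t) (r s : Fin t → ℕ)
    (hr : ∀ i, 0 < r i) (hs : ∀ i, 0 < s i) (hanti : StrictAnti r)
    (hsum : n = ∑ i, r i * s i) :
    2 * k + 1 ≤ r ⟨0, ht⟩ + ∑ i, s i :=
  stmt16_general (fun i _ => hanti.antitone (Fin.mk_le_of_le_val i.val.zero_le))
    (fun i _ => (s i).zero_le) (hsum ▸ h1)
end

section
/- Let k be a positive integer and suppose k² + k = r₁s₁ + r₂s₂ + ⋯ + r_t s_t where t ≥ 2 and r₁, …, r_t, s₁, …, s_t are positive integers with r₁ > r₂ > ⋯ > r_t. Then r₁ + s₁ + s₂ + ⋯ + s_t ≥ 2k + 2. -/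
/-! Put `S = s₁ + ⋯ + s_t`. Replacing every `rᵢ` by `r₁` strictly increases the sum when `t ≥ 2`,
so `k ^ 2 + k < r₁ * S`. By AM-GM,
`(2 * k + 1) ^ 2 = 4 * (k ^ 2 + k) + 1 < 4 * r₁ * S ≤ (r₁ + S) ^ 2`, hence `2 * k + 1 < r₁ + S`. -/

theorem sum_mul_lt_mul_sum {ι R : Type*} [Semiring R] [PartialOrder R] [IsStrictOrderedRing R]
    {t : Finset ι} {f g : ι → R} {a : R} (hf : ∀ i ∈ t, f i ≤ a) (hg : ∀ i ∈ t, 0 ≤ g i)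
    (hlt : ∃ i ∈ t, f i < a ∧ 0 < g i) :
    ∑ i ∈ t, f i * g i < a * ∑ i ∈ t, g i := by
  obtain ⟨j, hj, hfj, hgj⟩ := hlt
  rw [Finset.mul_sum]
  exact Finset.sum_lt_sum (fun i hi ↦ mul_le_mul_of_nonneg_right (hf i hi) (hg i hi))
    ⟨j, hj, mul_lt_mul_of_pos_right hfj hgj⟩

theorem two_mul_add_one_lt_add_of_sq_add_self_lt_mul {k a b : ℕ} (h : k ^ 2 + k < a * b) :
    2 * k + 1 < a + b := by
  refine lt_of_pow_lt_pow_left₀ 2 (Nat.zero_le _) ?_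
  calc
    (2 * k + 1) ^ 2 = 4 * (k ^ 2 + k) + 1 := by ring
    _ < 4 * (a * b) := by lia
    _ = 4 * a * b := (mul_assoc 4 a b).symm
    _ ≤ (a + b) ^ 2 := four_mul_le_sq_add a b

theorem stmt18_general {ι : Type*} {t : Finset ι} {r s : ι → ℕ} {k m : ℕ}
    (hr : ∀ i ∈ t, r i ≤ m) (hlt : ∃ i ∈ t, r i < m ∧ 0 < s i)
    (hsum : k ^ 2 + k ≤ ∑ i ∈ t, r i * s i) :
    2 * k + 2 ≤ m + ∑ i ∈ t, s i :=
  two_mul_add_one_lt_add_of_sq_add_self_lt_mul <|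
    hsum.trans_lt (sum_mul_lt_mul_sum hr (fun _ _ ↦ Nat.zero_le _) hlt)

/-- Let `k` be a positive integer. If `k^2 + k = r₁s₁ + ⋯ + r_t s_t` with `t ≥ 2`,
all `rᵢ, sᵢ` positive and `r₁ > r₂ > ⋯ > r_t`, then
`r₁ + s₁ + ⋯ + s_t ≥ 2k + 2`. -/
theorem stmt18 (k : ℕ) (hk : 0 < k)
    (t : ℕ) (ht : 2 ≤ t) (r s : Fin t → ℕ)
    (hr : ∀ i, 0 < r i) (hs : ∀ i, 0 < s i) (hanti : StrictAnti r)
    (hsum : k ^ 2 + k = ∑ i, r i * s i) :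
    2 * k + 2 ≤ r ⟨0, Nat.lt_of_lt_of_le Nat.zero_lt_two ht⟩ + ∑ i, s i :=
  stmt18_general (fun i _ ↦ hanti.antitone (Nat.zero_le i.val))
    ⟨⟨1, ht⟩, Finset.mem_univ _, hanti (Fin.mk_lt_mk.mpr Nat.zero_lt_one), hs _⟩ hsum.le
end
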